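/- Let Q be a quiver and P the path algebra of its double Q̄ over k. The k-linear map δ_{p,rt} : P → P ⊗ P defined on paths by δ_{p,rt}(a₁⋯aₙ) = Σ_{1 ≤ i < j ≤ n} −ω(a_i, a_j) · ((a_i)_t a_{i+1}⋯a_{j−1}) ⊗ ((a₁)_s a₁⋯a_{i−1} a_{j+1}⋯aₙ) is a (left) pre-Lie comultiplication on P. -/

import Mathlib

/-!
Statement 7: for a quiver `Q`, the map
`δ_{p,rt}(a₁⋯aₙ) = Σ_{i<j} −ω(a_i,a_j) ((a_i)_t a_{i+1}⋯a_{j−1}) ⊗ ((a₁)_s a₁⋯a_{i−1}a_{j+1}⋯aₙ)`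
is a (left) pre-Lie comultiplication on the path algebra `P` of the double quiver `Q̄`.
-/

open TensorProduct

noncomputable section

section PreLie

variable (k : Type*) [CommRing k] (g : Type*) [AddCommGroup g] [Module k g]

/-- `τ_{(12)}` on the triple tensor product `g ⊗ (g ⊗ g)`: `x⊗y⊗z ↦ y⊗x⊗z`. -/
def tau12 : g ⊗[k] (g ⊗[k] g) →ₗ[k] g ⊗[k] (g ⊗[k] g) :=
  (TensorProduct.assoc k g g g).toLinearMap ∘ₗ
    (LinearMap.rTensor g (TensorProduct.comm k g g).toLinearMap) ∘ₗ
    (TensorProduct.assoc k g g g).symm.toLinearMap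

variable {k g}

/-- `δ₀ : g → g ⊗ g` is a (left) pre-Lie comultiplication if
`(Id − τ_{(12)}) ∘ (δ₀ ⊗ Id − Id ⊗ δ₀) ∘ δ₀ = 0`. -/
def IsPreLieComul (δ : g →ₗ[k] g ⊗[k] g) : Prop :=
  (LinearMap.id - tau12 k g) ∘ₗ
      (((TensorProduct.assoc k g g g).toLinearMap ∘ₗ LinearMap.rTensor g δ)
        - LinearMap.lTensor g δ) ∘ₗ δ = 0

end PreLie

/-! ### Quivers, double quivers and paths

A quiver `Q` is given by a vertex type `I`, an arrow type `E`, and source/target maps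
`s t : E → I`. -/

/-- The arrows of the double quiver `Q̄ = Q ⊔ Q*`: `.inl e = e` and `.inr e = e*`. -/
abbrev Arr (E : Type*) := E ⊕ E

/-- The involution `a ↦ a*` on the arrows of the double quiver (with `(e*)* = e`). -/
def astar {E : Type*} : Arr E → Arr E
  | .inl e => .inr e
  | .inr e => .inl e

/-- The source `a_s` of an arrow of the double quiver. -/
def asrc {I E : Type*} (s t : E → I) : Arr E → I
  | .inl e => s e
  | .inr e => t e

/-- The target `a_t` of an arrow of the double quiver. -/
def atgt {I E : Type*} (s t : E → I) : Arr E → I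
  | .inl e => t e
  | .inr e => s e

open scoped Classical in
/-- The pairing `ω` on arrows of the double quiver: `ω(e,e*) = 1`, `ω(e*,e) = −1` for
`e ∈ Q`, and `ω(a,b) = 0` whenever `b ≠ a*`. -/
def omg (k : Type*) [CommRing k] {E : Type*} : Arr E → Arr E → k
  | .inl e, .inr e' => if e = e' then 1 else 0
  | .inr e, .inl e' => if e = e' then -1 else 0
  | _, _ => 0

/-- `IsPathFrom s t v l` means that `l` is a composable sequence of arrows of the double
quiver starting at the vertex `v`. -/
def IsPathFrom {I E : Type*} (s t : E → I) : I → List (Arr E) → Prop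
  | _, [] => True
  | v, a :: l => asrc s t a = v ∧ IsPathFrom s t (atgt s t a) l

/-- A path in the double quiver `Q̄`: a starting vertex together with a composable list
of arrows (the empty list gives the trivial path at the vertex). -/
structure QPath {I E : Type*} (s t : E → I) : Type _ where
  src : I
  arrows : List (Arr E)
  valid : IsPathFrom s t src arrows

variable (k : Type*) [CommRing k] {I E : Type*} (s t : E → I)

/-- `P`, the path algebra of the double quiver, as a `k`-module: the free `k`-module
with basis the paths in `Q̄`. -/
abbrev PathMod := QPath s t →₀ k

open scoped Classical in
/-- The basis vector of a path, or `0` if the data does not define a path. -/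
def mkP (v : I) (l : List (Arr E)) : PathMod k s t :=
  if h : IsPathFrom s t v l then Finsupp.single ⟨v, l, h⟩ (1 : k) else 0

/-- The summand of `δ_{p,rt}` for a pair of positions `i < j`:
`−ω(a_i,a_j) ((a_i)_t a_{i+1}⋯a_{j−1}) ⊗ ((a₁)_s a₁⋯a_{i−1} a_{j+1}⋯aₙ)`. -/
def dpTerm (p : QPath s t) (i j : ℕ) : PathMod k s t ⊗[k] PathMod k s t :=
  match p.arrows[i]?, p.arrows[j]? with
  | some a, some b =>
      (-(omg k a b)) •
        (mkP k s t (atgt s t a) ((p.arrows.drop (i+1)).take (j - i - 1)) ⊗ₜ[k]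
          mkP k s t p.src (p.arrows.take i ++ p.arrows.drop (j+1)))
  | _, _ => (0 : k) • (mkP k s t p.src [] ⊗ₜ[k] mkP k s t p.src [])

/-- The rooted pre-Lie comultiplication `δ_{p,rt}` on the path algebra `P`. -/
def deltaPrt : PathMod k s t →ₗ[k] PathMod k s t ⊗[k] PathMod k s t :=
  Finsupp.lift (PathMod k s t ⊗[k] PathMod k s t) k (QPath s t) fun p =>
    ∑ i ∈ Finset.range p.arrows.length, ∑ j ∈ Finset.range p.arrows.length,
      if i < j then dpTerm k s t p i j else (0 : k) • dpTerm k s t p i j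

/-!
Forget composability and cut words: send a word `u₀ a u₁ b u₂` to `ω(a, b) u₁ ⊗ u₀ u₂`, summed over
all pairs of letters. Cutting twice chooses two pairs of letters. In `(δ ⊗ Id) δ` the second pair is
nested in the first. In `(Id ⊗ δ) δ` the pair cut second either surrounds the first, which gives the
same nested terms, or lies on one side of it, and `τ_{(12)}` exchanges the two sides. The
coassociator is therefore `τ_{(12)}`-symmetric for arbitrary weights `ω`. If `ω(a, b) ≠ 0` only when
`b` ends where `a` starts, then cutting a path yields paths, so the path algebra is a direct summand
of the words to which the comultiplication restricts.
-/

section SplitSums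

variable {α M : Type*} [AddCommMonoid M]

theorem sum_range_ite_lt (n i : ℕ) (f : ℕ → M) :
    ∑ j ∈ Finset.range n, (if i < j then f j else 0) =
      ∑ j ∈ Finset.range (n - (i + 1)), f (i + 1 + j) := by
  rw [← Finset.sum_filter, ← Finset.sum_Ico_eq_sum_range]
  congr 1
  ext j
  simp [and_comm]

/-- The sum of `F u₀ a u₁` over all decompositions `l = u₀ ++ a :: u₁`, indexed by the position
of the distinguished letter `a`. -/
def sumSplits (l : List α) (F : List α → α → List α → M) : M :=
  ∑ i : Fin l.length, F (l.take i) l[i] (l.drop (i + 1))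

@[simp]
theorem sumSplits_nil (F : List α → α → List α → M) : sumSplits [] F = 0 := rfl

@[simp]
theorem sumSplits_cons (x : α) (l : List α) (F : List α → α → List α → M) :
    sumSplits (x :: l) F = F [] x l + sumSplits l fun u₀ a u₁ => F (x :: u₀) a u₁ := by
  simp [sumSplits, Fin.sum_univ_succ]

theorem sumSplits_congr {l : List α} {F G : List α → α → List α → M}
    (h : ∀ u₀ a u₁, l = u₀ ++ a :: u₁ → F u₀ a u₁ = G u₀ a u₁) :
    sumSplits l F = sumSplits l G :=
  Finset.sum_congr rfl fun i _ => h _ _ _ (by simp)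

theorem sumSplits_add (l : List α) (F G : List α → α → List α → M) :
    (sumSplits l fun u₀ a u₁ => F u₀ a u₁ + G u₀ a u₁) = sumSplits l F + sumSplits l G :=
  Finset.sum_add_distrib

theorem map_sumSplits {N H : Type*} [AddCommMonoid N] [FunLike H M N] [AddMonoidHomClass H M N]
    (f : H) (l : List α) (F : List α → α → List α → M) :
    f (sumSplits l F) = sumSplits l fun u₀ a u₁ => f (F u₀ a u₁) :=
  map_sum f _ _

theorem sumSplits_comm {β : Type*} (l : List α) (m : List β)
    (F : List α → α → List α → List β → β → List β → M) :
    (sumSplits l fun u₀ a u₁ => sumSplits m fun v₀ b v₁ => F u₀ a u₁ v₀ b v₁) =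
      sumSplits m fun v₀ b v₁ => sumSplits l fun u₀ a u₁ => F u₀ a u₁ v₀ b v₁ :=
  Finset.sum_comm

theorem sumSplits_append (l m : List α) (F : List α → α → List α → M) :
    sumSplits (l ++ m) F =
      (sumSplits l fun u₀ a u₁ => F u₀ a (u₁ ++ m)) +
        sumSplits m fun u₀ a u₁ => F (l ++ u₀) a u₁ := by
  induction l generalizing F with
  | nil => simp
  | cons x l ih => simp [ih, add_assoc]

theorem sumSplits_sumSplits_prefix (l : List α) (F : List α → α → List α → α → List α → M) :
    (sumSplits l fun p b u₂ => sumSplits p fun u₀ a u₁ => F u₀ a u₁ b u₂) =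
      sumSplits l fun u₀ a q => sumSplits q fun u₁ b u₂ => F u₀ a u₁ b u₂ := by
  induction l generalizing F with
  | nil => rfl
  | cons x l ih => simp [sumSplits_add, ih]

/-- The sum of `F u₀ a u₁ b u₂` over all decompositions `l = u₀ ++ a :: u₁ ++ b :: u₂`. -/
def sumSplits₂ (l : List α) (F : List α → α → List α → α → List α → M) : M :=
  sumSplits l fun u₀ a q => sumSplits q fun u₁ b u₂ => F u₀ a u₁ b u₂

theorem sumSplits₂_congr {l : List α} {F G : List α → α → List α → α → List α → M}
    (h : ∀ u₀ a u₁ b u₂, l = u₀ ++ a :: (u₁ ++ b :: u₂) → F u₀ a u₁ b u₂ = G u₀ a u₁ b u₂) :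
    sumSplits₂ l F = sumSplits₂ l G :=
  sumSplits_congr fun _ _ _ hl => sumSplits_congr fun _ _ _ hq => h _ _ _ _ _ (hq ▸ hl)

theorem map_sumSplits₂ {N H : Type*} [AddCommMonoid N] [FunLike H M N] [AddMonoidHomClass H M N]
    (f : H) (l : List α) (F : List α → α → List α → α → List α → M) :
    f (sumSplits₂ l F) = sumSplits₂ l fun u₀ a u₁ b u₂ => f (F u₀ a u₁ b u₂) := by
  simp only [sumSplits₂, map_sumSplits]

theorem sumSplits₂_add (l : List α) (F G : List α → α → List α → α → List α → M) :
    (sumSplits₂ l fun u₀ a u₁ b u₂ => F u₀ a u₁ b u₂ + G u₀ a u₁ b u₂) =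
      sumSplits₂ l F + sumSplits₂ l G := by
  simp only [sumSplits₂, sumSplits_add]

theorem sumSplits₂_append (l m : List α) (F : List α → α → List α → α → List α → M) :
    sumSplits₂ (l ++ m) F =
      (sumSplits₂ l fun u₀ a u₁ b u₂ => F u₀ a u₁ b (u₂ ++ m)) +
      (sumSplits l fun u₀ a u₁ => sumSplits m fun v₀ b v₁ => F u₀ a (u₁ ++ v₀) b v₁) +
      sumSplits₂ m fun u₀ a u₁ b u₂ => F (l ++ u₀) a u₁ b u₂ := by
  simp only [sumSplits₂, sumSplits_append, sumSplits_add]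

/-- The sum of `F u₀ a u₁ b u₂ c u₃ d u₄` over all decompositions
`l = u₀ ++ a :: u₁ ++ b :: u₂ ++ c :: u₃ ++ d :: u₄`. -/
def sumSplits₄ (l : List α)
    (F : List α → α → List α → α → List α → α → List α → α → List α → M) : M :=
  sumSplits₂ l fun u₀ a u₁ b q => sumSplits₂ q fun u₂ c u₃ d u₄ => F u₀ a u₁ b u₂ c u₃ d u₄

theorem sumSplits₂_sumSplits₂_middle (l : List α)
    (F : List α → α → List α → α → List α → α → List α → α → List α → M) :
    (sumSplits₂ l fun u₀ a m d u₄ => sumSplits₂ m fun u₁ b u₂ c u₃ =>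
      F u₀ a u₁ b u₂ c u₃ d u₄) = sumSplits₄ l F := by
  simp only [sumSplits₂, sumSplits₄, sumSplits_sumSplits_prefix]

theorem sumSplits₂_sumSplits_outer (l : List α)
    (F : List α → α → List α → α → List α → α → List α → α → List α → M) :
    (sumSplits₂ l fun p b u₂ c q => sumSplits p fun u₀ a u₁ => sumSplits q fun u₃ d u₄ =>
      F u₀ a u₁ b u₂ c u₃ d u₄) = sumSplits₄ l F := by
  calc
    _ = sumSplits l fun p b r => sumSplits p fun u₀ a u₁ => sumSplits₂ r fun u₂ c u₃ d u₄ =>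
          F u₀ a u₁ b u₂ c u₃ d u₄ :=
        sumSplits_congr fun _ _ _ _ => sumSplits_comm _ _ _
    _ = sumSplits₄ l F := sumSplits_sumSplits_prefix _ _

theorem sumSplits₂_sumSplits₂_prefix (l : List α)
    (F : List α → α → List α → α → List α → α → List α → α → List α → M) :
    (sumSplits₂ l fun p c u₃ d u₄ => sumSplits₂ p fun u₀ a u₁ b u₂ =>
      F u₀ a u₁ b u₂ c u₃ d u₄) = sumSplits₄ l F := by
  calc
    _ = sumSplits l fun p c r => sumSplits₂ p fun u₀ a u₁ b u₂ => sumSplits r fun u₃ d u₄ =>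
          F u₀ a u₁ b u₂ c u₃ d u₄ :=
        sumSplits_congr fun _ _ _ _ => (sumSplits_comm _ _ _).trans <|
          sumSplits_congr fun _ _ _ _ => sumSplits_comm _ _ _
    _ = sumSplits₄ l F := by
        simp only [sumSplits₂, sumSplits₄, sumSplits_sumSplits_prefix]

end SplitSums

section PreLieComul

variable {k} {g h : Type*} [AddCommGroup g] [Module k g] [AddCommGroup h] [Module k h]

@[simp]
theorem tau12_tmul (x y z : g) : tau12 k g (x ⊗ₜ (y ⊗ₜ z)) = y ⊗ₜ (x ⊗ₜ z) := rfl

theorem tau12_tau12 (x : g ⊗[k] (g ⊗[k] g)) : tau12 k g (tau12 k g x) = x := by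
  have : tau12 k g ∘ₗ tau12 k g = LinearMap.id := by ext; rfl
  exact LinearMap.congr_fun this x

theorem tau12_neg_tau12_add_self (x : g ⊗[k] (g ⊗[k] g)) :
    tau12 k g (-(tau12 k g x + x)) = -(tau12 k g x + x) := by
  rw [map_neg, map_add, tau12_tau12, add_comm]

/-- The coassociator `(δ ⊗ Id − Id ⊗ δ) ∘ δ`, which measures the failure of `δ` to be
coassociative. -/
def coassociator (δ : g →ₗ[k] g ⊗[k] g) : g →ₗ[k] g ⊗[k] (g ⊗[k] g) :=
  ((TensorProduct.assoc k g g g).toLinearMap ∘ₗ δ.rTensor g - δ.lTensor g) ∘ₗ δ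

theorem coassociator_apply (δ : g →ₗ[k] g ⊗[k] g) (x : g) :
    coassociator δ x = TensorProduct.assoc k g g g (δ.rTensor g (δ x)) - δ.lTensor g (δ x) := rfl

theorem isPreLieComul_iff_tau12_comp_coassociator {δ : g →ₗ[k] g ⊗[k] g} :
    IsPreLieComul δ ↔ tau12 k g ∘ₗ coassociator δ = coassociator δ := by
  rw [eq_comm, ← sub_eq_zero]
  rfl

theorem coassociator_comp {δ : g →ₗ[k] g ⊗[k] g} {ε : h →ₗ[k] h ⊗[k] h} {ι : g →ₗ[k] h}
    (hι : map ι ι ∘ₗ δ = ε ∘ₗ ι) :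
    coassociator ε ∘ₗ ι = map ι (map ι ι) ∘ₗ coassociator δ := by
  have hleft : (TensorProduct.assoc k h h h).toLinearMap ∘ₗ ε.rTensor h ∘ₗ map ι ι =
      map ι (map ι ι) ∘ₗ (TensorProduct.assoc k g g g).toLinearMap ∘ₗ δ.rTensor g := by
    rw [LinearMap.rTensor_comp_map, ← hι, ← LinearMap.comp_assoc, map_map_comp_assoc_eq,
      LinearMap.comp_assoc, LinearMap.map_comp_rTensor]
  have hright : ε.lTensor h ∘ₗ map ι ι = map ι (map ι ι) ∘ₗ δ.lTensor g := by
    rw [LinearMap.lTensor_comp_map, ← hι, LinearMap.map_comp_lTensor]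
  rw [coassociator, coassociator, LinearMap.comp_assoc, ← hι, ← LinearMap.comp_assoc,
    LinearMap.sub_comp, LinearMap.comp_assoc, hleft, hright, ← LinearMap.comp_sub,
    LinearMap.comp_assoc]

theorem IsPreLieComul.of_leftInverse {δ : g →ₗ[k] g ⊗[k] g} {ε : h →ₗ[k] h ⊗[k] h}
    (hε : IsPreLieComul ε) (ι : g →ₗ[k] h) (ρ : h →ₗ[k] g) (hρ : ρ ∘ₗ ι = LinearMap.id)
    (hι : map ι ι ∘ₗ δ = ε ∘ₗ ι) : IsPreLieComul δ := by
  rw [isPreLieComul_iff_tau12_comp_coassociator] at hε ⊢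
  have hinj : Function.Injective (map ι (map ι ι)) := by
    refine Function.HasLeftInverse.injective ⟨map ρ (map ρ ρ), fun x => ?_⟩
    rw [← LinearMap.comp_apply, ← map_comp, ← map_comp, hρ, map_id, map_id, LinearMap.id_apply]
  have hτ : map ι (map ι ι) ∘ₗ tau12 k g = tau12 k h ∘ₗ map ι (map ι ι) := by ext; rfl
  refine (LinearMap.cancel_left hinj).mp ?_
  rw [← LinearMap.comp_assoc, hτ, LinearMap.comp_assoc, ← coassociator_comp hι,
    ← LinearMap.comp_assoc, hε]

end PreLieComul

section Words

variable {k} {α : Type*}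

/-- The free module on words in the alphabet `α` labelled by a vertex in `I`; it contains the path
algebra as the span of the composable words labelled by their source. -/
abbrev WordMod (k I α : Type*) [CommRing k] := I × List α →₀ k

/-- The basis vector of the word `l` labelled by the vertex `v`. -/
abbrev word (k : Type*) [CommRing k] {I α : Type*} (v : I) (l : List α) : WordMod k I α :=
  Finsupp.single (v, l) 1

/-- The comultiplication on labelled words which cuts out the subword strictly between two letters
`a`, `b`, with weight `ω a b`, and labels it by `tgt a`. -/
def wordComul (tgt : α → I) (ω : α → α → k) :
    WordMod k I α →ₗ[k] WordMod k I α ⊗[k] WordMod k I α :=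
  Finsupp.linearCombination k fun w => sumSplits₂ w.2 fun u₀ a u₁ b u₂ =>
    ω a b • (word k (tgt a) u₁ ⊗ₜ word k w.1 (u₀ ++ u₂))

theorem wordComul_word (tgt : α → I) (ω : α → α → k) (v : I) (l : List α) :
    wordComul tgt ω (word k v l) = sumSplits₂ l fun u₀ a u₁ b u₂ =>
      ω a b • (word k (tgt a) u₁ ⊗ₜ word k v (u₀ ++ u₂)) := by
  simp [wordComul]

/-- The part of an iterated comultiplication of words where the second pair of letters lies between
the letters of the first pair. -/
def nestedCuts (tgt : α → I) (ω : α → α → k) (v : I) (l : List α) :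
    WordMod k I α ⊗[k] (WordMod k I α ⊗[k] WordMod k I α) :=
  sumSplits₄ l fun u₀ a u₁ b u₂ c u₃ d u₄ => (ω a d * ω b c) •
    (word k (tgt b) u₂ ⊗ₜ (word k (tgt a) (u₁ ++ u₃) ⊗ₜ word k v (u₀ ++ u₄)))

/-- The part of an iterated comultiplication of words where the second pair of letters lies to the
right of the first pair. -/
def disjointCuts (tgt : α → I) (ω : α → α → k) (v : I) (l : List α) :
    WordMod k I α ⊗[k] (WordMod k I α ⊗[k] WordMod k I α) :=
  sumSplits₄ l fun u₀ a u₁ b u₂ c u₃ d u₄ => (ω a b * ω c d) •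
    (word k (tgt a) u₁ ⊗ₜ (word k (tgt c) u₃ ⊗ₜ word k v (u₀ ++ u₂ ++ u₄)))

theorem assoc_rTensor_wordComul (tgt : α → I) (ω : α → α → k) (v : I) (l : List α) :
    TensorProduct.assoc k _ _ _ ((wordComul tgt ω).rTensor _ (wordComul tgt ω (word k v l))) =
      nestedCuts tgt ω v l := by
  simp only [nestedCuts, ← sumSplits₂_sumSplits₂_middle, wordComul_word, map_sumSplits₂, map_smul,
    LinearMap.rTensor_tmul]
  simp only [sumSplits₂, sumSplits, TensorProduct.sum_tmul, Finset.smul_sum, map_sum,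
    TensorProduct.smul_tmul', TensorProduct.assoc_tmul, smul_smul]

theorem lTensor_wordComul (tgt : α → I) (ω : α → α → k) (v : I) (l : List α) :
    (wordComul tgt ω).lTensor _ (wordComul tgt ω (word k v l)) =
      tau12 k _ (disjointCuts tgt ω v l) + nestedCuts tgt ω v l + disjointCuts tgt ω v l := by
  have hprefix : (sumSplits₂ l fun p c u₃ d u₄ => sumSplits₂ p fun u₀ a u₁ b u₂ =>
      (ω c d * ω a b) • (word k (tgt c) u₃ ⊗ₜ[k] (word k (tgt a) u₁ ⊗ₜ[k]
        word k v (u₀ ++ (u₂ ++ u₄))))) = tau12 k _ (disjointCuts tgt ω v l) := by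
    simp only [disjointCuts, ← sumSplits₂_sumSplits₂_prefix, map_sumSplits₂, map_smul, tau12_tmul,
      List.append_assoc, mul_comm]
  have houter : (sumSplits₂ l fun p b u₂ c q => sumSplits p fun u₀ a u₁ => sumSplits q
      fun u₃ d u₄ => (ω b c * ω a d) • (word k (tgt b) u₂ ⊗ₜ[k] (word k (tgt a) (u₁ ++ u₃) ⊗ₜ[k]
        word k v (u₀ ++ u₄)))) = nestedCuts tgt ω v l := by
    simp only [nestedCuts, ← sumSplits₂_sumSplits_outer, mul_comm]
  have hsuffix : (sumSplits₂ l fun u₀ a u₁ b q => sumSplits₂ q fun u₂ c u₃ d u₄ =>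
      (ω a b * ω c d) • (word k (tgt a) u₁ ⊗ₜ[k] (word k (tgt c) u₃ ⊗ₜ[k]
        word k v (u₀ ++ u₂ ++ u₄)))) = disjointCuts tgt ω v l := rfl
  rw [← hprefix, ← houter, ← hsuffix, ← sumSplits₂_add, ← sumSplits₂_add]
  simp only [wordComul_word, map_sumSplits₂, map_smul, LinearMap.lTensor_tmul, sumSplits₂_append]
  simp only [sumSplits₂, sumSplits, TensorProduct.tmul_add, smul_add, TensorProduct.tmul_sum,
    Finset.smul_sum, TensorProduct.tmul_smul, smul_smul]

theorem coassociator_wordComul (tgt : α → I) (ω : α → α → k) (v : I) (l : List α) :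
    coassociator (wordComul tgt ω) (word k v l) =
      -(tau12 k _ (disjointCuts tgt ω v l) + disjointCuts tgt ω v l) := by
  rw [coassociator_apply, assoc_rTensor_wordComul, lTensor_wordComul]
  abel

theorem wordComul_isPreLieComul (tgt : α → I) (ω : α → α → k) :
    IsPreLieComul (wordComul tgt ω) := by
  rw [isPreLieComul_iff_tau12_comp_coassociator]
  ext ⟨v, l⟩ : 2
  simp only [LinearMap.comp_apply, Finsupp.lsingle_apply, coassociator_wordComul]
  exact tau12_neg_tau12_add_self _

end Words

section Paths

variable {k s t}

/-- The end vertex of a sequence of arrows starting at the vertex `v`. -/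
def endVertex (s t : E → I) (v : I) (l : List (Arr E)) : I :=
  l.foldl (fun _ a => atgt s t a) v

theorem isPathFrom_append {v : I} {l m : List (Arr E)} :
    IsPathFrom s t v (l ++ m) ↔ IsPathFrom s t v l ∧ IsPathFrom s t (endVertex s t v l) m := by
  induction l generalizing v with
  | nil => simp [IsPathFrom, endVertex]
  | cons a l ih => simp [IsPathFrom, endVertex, ih, and_assoc]

theorem IsPathFrom.cut {v : I} {u₀ u₁ u₂ : List (Arr E)} {a b : Arr E}
    (hab : atgt s t b = asrc s t a) (hp : IsPathFrom s t v (u₀ ++ a :: (u₁ ++ b :: u₂))) :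
    IsPathFrom s t (atgt s t a) u₁ ∧ IsPathFrom s t v (u₀ ++ u₂) := by
  simp only [isPathFrom_append, IsPathFrom] at hp ⊢
  obtain ⟨h₀, ha, h₁, -, h₂⟩ := hp
  exact ⟨h₁, h₀, ha ▸ hab ▸ h₂⟩

theorem atgt_eq_asrc_of_omg_ne_zero {a b : Arr E} (hab : omg k a b ≠ 0) :
    atgt s t b = asrc s t a := by
  rcases a with a | a <;> rcases b with b | b <;> simp_all [omg, atgt, asrc]

variable (k s t) in
/-- The inclusion of the path algebra in the module of labelled words. -/
def pathToWord : PathMod k s t →ₗ[k] WordMod k I (Arr E) :=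
  Finsupp.linearCombination k fun p => word k p.src p.arrows

variable (k s t) in
/-- The projection to the path algebra which kills the non-composable words. -/
def wordToPath : WordMod k I (Arr E) →ₗ[k] PathMod k s t :=
  Finsupp.linearCombination k fun w => mkP k s t w.1 w.2

theorem mkP_src_arrows (p : QPath s t) : mkP k s t p.src p.arrows = Finsupp.single p 1 :=
  dif_pos p.valid

theorem pathToWord_mkP {v : I} {l : List (Arr E)} (h : IsPathFrom s t v l) :
    pathToWord k s t (mkP k s t v l) = word k v l := by
  simp [pathToWord, mkP, h]

theorem wordToPath_comp_pathToWord :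
    wordToPath k s t ∘ₗ pathToWord k s t = LinearMap.id := by
  ext p : 2
  simp [wordToPath, pathToWord, mkP_src_arrows]

variable (s t) in
/-- The comultiplication given by the formula of `δ_{p,rt}`, with arbitrary weights `ω` in place of
`-omg k`; by the convention of `mkP`, a term vanishes unless both its factors are paths. -/
def pathComul (ω : Arr E → Arr E → k) : PathMod k s t →ₗ[k] PathMod k s t ⊗[k] PathMod k s t :=
  Finsupp.linearCombination k fun p => sumSplits₂ p.arrows fun u₀ a u₁ b u₂ =>
    ω a b • (mkP k s t (atgt s t a) u₁ ⊗ₜ mkP k s t p.src (u₀ ++ u₂))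

theorem map_pathToWord_comp_pathComul {ω : Arr E → Arr E → k}
    (hω : ∀ a b, ω a b ≠ 0 → atgt s t b = asrc s t a) :
    map (pathToWord k s t) (pathToWord k s t) ∘ₗ pathComul s t ω =
      wordComul (atgt s t) ω ∘ₗ pathToWord k s t := by
  refine Finsupp.lhom_ext' fun p => LinearMap.ext_ring ?_
  simp only [pathComul, pathToWord, LinearMap.comp_apply, Finsupp.lsingle_apply,
    Finsupp.linearCombination_single, one_smul, map_sumSplits₂, wordComul_word, map_smul, map_tmul]
  refine sumSplits₂_congr fun u₀ a u₁ b u₂ hp => ?_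
  by_cases hab : ω a b = 0
  · simp only [hab, zero_smul]
  · obtain ⟨h₁, h₀₂⟩ := IsPathFrom.cut (hω a b hab) (hp ▸ p.valid)
    rw [← pathToWord_mkP h₁, ← pathToWord_mkP h₀₂]
    rfl

theorem dpTerm_add (p : QPath s t) (i : Fin p.arrows.length)
    (j : Fin (p.arrows.drop (i + 1)).length) :
    dpTerm k s t p i ((i : ℕ) + 1 + j) = (-omg k p.arrows[i] (p.arrows.drop (i + 1))[j]) •
      (mkP k s t (atgt s t p.arrows[i]) ((p.arrows.drop (i + 1)).take j) ⊗ₜ[k]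
        mkP k s t p.src (p.arrows.take i ++ (p.arrows.drop (i + 1)).drop (j + 1))) := by
  have hj : (i : ℕ) + 1 + j < p.arrows.length := by
    have := j.2.trans_eq List.length_drop
    omega
  have hsub : (i : ℕ) + 1 + j - i - 1 = j := by omega
  simp [dpTerm, hj, hsub, ← add_assoc]

variable (k s t) in
theorem deltaPrt_eq_pathComul : deltaPrt k s t = pathComul s t fun a b => -omg k a b := by
  refine Finsupp.lhom_ext' fun p => LinearMap.ext_ring ?_
  simp only [deltaPrt, pathComul, LinearMap.comp_apply, Finsupp.lsingle_apply, Finsupp.lift_apply,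
    Finsupp.linearCombination_single, zero_smul, Finsupp.sum_single_index, one_smul]
  refine (Finset.sum_range _).trans (Finset.sum_congr rfl fun i _ => ?_)
  rw [sum_range_ite_lt, ← List.length_drop, Finset.sum_range]
  exact Finset.sum_congr rfl fun j _ => dpTerm_add p i j

theorem deltaPrt_isPreLieComul_general {ω : Arr E → Arr E → k}
    (hω : ∀ a b, ω a b ≠ 0 → atgt s t b = asrc s t a) : IsPreLieComul (pathComul s t ω) :=
  (wordComul_isPreLieComul (atgt s t) ω).of_leftInverse (pathToWord k s t) (wordToPath k s t)
    wordToPath_comp_pathToWord (map_pathToWord_comp_pathComul hω)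

end Paths

/-- `δ_{p,rt}` is a (left) pre-Lie comultiplication on `P`. -/
theorem deltaPrt_isPreLieComul : IsPreLieComul (deltaPrt k s t) := by
  rw [deltaPrt_eq_pathComul]
  exact deltaPrt_isPreLieComul_general fun a b hab =>
    atgt_eq_asrc_of_omg_ne_zero (neg_ne_zero.mp hab)

end
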